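/- arXiv:1411.5662 — 3 statements merged into one kernel-verified Lean document; each statement's English description precedes it below -/
import Mathlib

section
/- Let π be a right-angled Artin group with defining graph Γ. Then Hom_Λ(H¹(π; Λ), Λ) ≠ 0 if and only if Γ is disconnected and contains at least one edge. -/
open Finset

/-- The integral group ring `ℤ[π]`. -/
abbrev GroupRing (π : Type) [Group π] : Type := MonoidAlgebra ℤ π

variable (π : Type) [Group π]

/-- The differential of the inhomogeneous cochain complex computing the group cohomology
`H^*(π; M)` of a left `ℤ[π]`-module `M`. -/
noncomputable def cochainD (M : Type) [AddCommGroup M] [Module (GroupRing π) M] (n : ℕ) :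
    ((Fin n → π) → M) →+ ((Fin (n + 1) → π) → M) where
  toFun f g := (MonoidAlgebra.single (g 0) (1 : ℤ)) • f (fun i => g i.succ)
      + ∑ j : Fin (n + 1), ((-1 : ℤ) ^ ((j : ℕ) + 1)) • f (Fin.contractNth j (· * ·) g)
  map_zero' := by
    funext g; simp
  map_add' f₁ f₂ := by
    funext g
    simp only [Pi.add_apply, smul_add, Finset.sum_add_distrib]
    abel

/-- Inhomogeneous `n`-cocycles. -/
noncomputable def cocyclesGen (M : Type) [AddCommGroup M] [Module (GroupRing π) M] (n : ℕ) :
    AddSubgroup ((Fin n → π) → M) :=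
  (cochainD π M n).ker

/-- Inhomogeneous `n`-coboundaries. -/
noncomputable def coboundariesGen (M : Type) [AddCommGroup M] [Module (GroupRing π) M] :
    (n : ℕ) → AddSubgroup ((Fin n → π) → M)
  | 0 => ⊥
  | (n + 1) => (cochainD π M n).range

/-- The group cohomology `H^n(π; M)`, as an abelian group. -/
noncomputable def groupCoh (M : Type) [AddCommGroup M] [Module (GroupRing π) M] (n : ℕ) : Type :=
  (cocyclesGen π M n) ⧸ ((coboundariesGen π M n).addSubgroupOf (cocyclesGen π M n))

noncomputable instance (M : Type) [AddCommGroup M] [Module (GroupRing π) M] (n : ℕ) :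
    AddCommGroup (groupCoh π M n) := by
  unfold groupCoh; infer_instance

/-- `cd π ≤ n` : the cohomological dimension of `π` is at most `n`, i.e. `H^i(π; M) = 0`
for all `i > n` and all `ℤ[π]`-modules `M`. -/
def cdLE (n : ℕ) : Prop :=
  ∀ (M : Type) (_ : AddCommGroup M) (_ : Module (GroupRing π) M) (i : ℕ), n < i →
    Subsingleton (groupCoh π M i)

/-- `π` is a finitely presented group. -/
def IsFinitelyPresented : Prop :=
  ∃ (m : ℕ) (rels : Finset (FreeGroup (Fin m))),
    Nonempty (PresentedGroup (rels : Set (FreeGroup (Fin m))) ≃* π)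

/-- The cochain differential with group ring coefficients is right `ℤ[π]`-linear
(where right modules are left modules over the opposite ring). -/
noncomputable def cochainDOp (n : ℕ) :
    ((Fin n → π) → GroupRing π) →ₗ[(GroupRing π)ᵐᵒᵖ] ((Fin (n + 1) → π) → GroupRing π) where
  toFun := cochainD π (GroupRing π) n
  map_add' := (cochainD π (GroupRing π) n).map_add
  map_smul' a f := by
    funext g
    simp only [cochainD, AddMonoidHom.coe_mk, ZeroHom.coe_mk, Pi.smul_apply,
      MulOpposite.smul_eq_mul_unop, smul_eq_mul, RingHom.id_apply]
    rw [add_mul, Finset.sum_mul, ← mul_assoc]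
    congr 1
    refine Finset.sum_congr rfl fun j _ => ?_
    rw [smul_mul_assoc]

/-- Cocycles with group ring coefficients, as a right `ℤ[π]`-submodule. -/
noncomputable def cocyclesΛ (n : ℕ) :
    Submodule (GroupRing π)ᵐᵒᵖ ((Fin n → π) → GroupRing π) :=
  LinearMap.ker (cochainDOp π n)

/-- Coboundaries with group ring coefficients, as a right `ℤ[π]`-submodule. -/
noncomputable def coboundariesΛ :
    (n : ℕ) → Submodule (GroupRing π)ᵐᵒᵖ ((Fin n → π) → GroupRing π)
  | 0 => ⊥
  | (n + 1) => LinearMap.range (cochainDOp π n)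

/-- The group cohomology `H^n(π; ℤ[π])` with group ring coefficients,
as a right `ℤ[π]`-module. -/
noncomputable def groupCohΛ (n : ℕ) : Type :=
  (cocyclesΛ π n) ⧸ ((coboundariesΛ π n).comap (cocyclesΛ π n).subtype)

noncomputable instance (n : ℕ) : AddCommGroup (groupCohΛ π n) := by
  unfold groupCohΛ; infer_instance

noncomputable instance (n : ℕ) : Module (GroupRing π)ᵐᵒᵖ (groupCohΛ π n) := by
  unfold groupCohΛ; infer_instance

/-- The commutator relations defining a right-angled Artin group: one commutator
`[v, w] = v w v⁻¹ w⁻¹` for each edge `{v, w}` of the defining graph. -/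
def raagRels (V : Type) (Γ : SimpleGraph V) : Set (FreeGroup V) :=
  {r | ∃ v w : V, Γ.Adj v w ∧
    r = FreeGroup.of v * FreeGroup.of w * (FreeGroup.of v)⁻¹ * (FreeGroup.of w)⁻¹}

/-- The right-angled Artin group defined by the simplicial graph `Γ`. -/
def RAAGroup (V : Type) (Γ : SimpleGraph V) : Type := PresentedGroup (raagRels V Γ)

instance (V : Type) (Γ : SimpleGraph V) : Group (RAAGroup V Γ) :=
  inferInstanceAs (Group (PresentedGroup (raagRels V Γ)))

/-- The generator of a right-angled Artin group corresponding to a vertex. -/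
def RAAGroup.of {V : Type} {Γ : SimpleGraph V} (v : V) : RAAGroup V Γ :=
  PresentedGroup.of v

/-!
A class in `H¹(G; ℤ[G])` is a crossed homomorphism modulo the principal ones `g ↦ (g - 1) x`. If
`v` and `w` are adjacent vertices, then `w - 1` is a nonzerodivisor on `ℤ[G] / (v - 1) ℤ[G]`, and
`(v - 1) d(w) = (w - 1) d(v)` forces `d(v) ∈ (v - 1) ℤ[G]`. So every class has a unique
representative vanishing at `v`, and this representative vanishes on the whole component of `v`,
because each `u - 1` is a nonzerodivisor. For connected `Γ` it follows that `H¹ = 0`; otherwise,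
evaluating the representative at a vertex outside the component is a nonzero functional.

If `Γ` has no edge, then `G` is free and `d = ∑ᵥ ∂ᵥ · d(v)` with the Fox derivatives `∂ᵥ`. A
functional `F` that kills the principal crossed homomorphisms satisfies `∑ᵥ F(∂ᵥ) (v - 1) = 0`, so
all `F(∂ᵥ)` vanish, the elements `v - 1` being left linearly independent.
-/

theorem finsupp_eq_zero_of_comp_eq_self {α M : Type*} [Zero M] {σ : α → α}
    (hσ : Function.Injective σ) (hper : ∀ a, a ∉ Function.periodicPts σ) {f : α →₀ M}
    (hf : ∀ a, f (σ a) = f a) : f = 0 := by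
  have hmaps : Set.MapsTo σ f.support f.support := fun a ha => by simpa [hf] using ha
  ext a
  by_contra ha
  have hmem := (hmaps.restrict_inj.2 hσ.injOn).mem_periodicPts ⟨a, Finsupp.mem_support_iff.2 ha⟩
  exact hper a (Function.Semiconj.mapsTo_periodicPts (g := Subtype.val) (fun _ => rfl) hmem)

section Augmentation

variable {R G : Type*} [Ring R] [Group G]

/-- The element `g - 1` of the group ring `R[G]`. These elements generate the augmentation
ideal. -/
noncomputable def augGen (R : Type*) [Ring R] (g : G) : MonoidAlgebra R G :=
  MonoidAlgebra.of R G g - 1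

theorem augGen_one : augGen R (1 : G) = 0 := by
  rw [augGen, map_one, sub_self]

theorem augGen_mul (g h : G) :
    augGen R (g * h) = augGen R g + MonoidAlgebra.of R G g * augGen R h := by
  simp only [augGen, map_mul, mul_sub, mul_one]
  abel

theorem augGen_mul' (g h : G) :
    augGen R (g * h) = augGen R g * MonoidAlgebra.of R G h + augGen R h := by
  simp only [augGen, map_mul, sub_mul, one_mul]
  abel

theorem augGen_inv (g : G) : augGen R g⁻¹ = -(augGen R g * MonoidAlgebra.of R G g⁻¹) := by
  rw [eq_neg_iff_add_eq_zero, add_comm, ← augGen_mul', mul_inv_cancel, augGen_one]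

theorem commute_augGen {g h : G} (hgh : Commute g h) : Commute (augGen R g) (augGen R h) :=
  ((hgh.map (MonoidAlgebra.of R G)).sub_left (Commute.one_left _)).sub_right (Commute.one_right _)

theorem augGen_dvd_augGen_of_mem_zpowers {v h : G} (hh : h ∈ Subgroup.zpowers v) :
    augGen R v ∣ augGen R h := by
  rw [Subgroup.zpowers_eq_closure] at hh
  induction hh using Subgroup.closure_induction with
  | mem g hg => rw [Set.mem_singleton_iff.1 hg]
  | one => rw [augGen_one]; exact dvd_zero _
  | mul g k _ _ hg hk => rw [augGen_mul']; exact dvd_add (hg.mul_right _) hk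
  | inv g _ hg => rw [augGen_inv]; exact (hg.mul_right _).neg_right

/-- The coefficients of an element of `R[G]` summed over each right coset of `H`, that is, the
quotient map `R[G] → R[H\G]`. -/
noncomputable def cosetSum (H : Subgroup G) :
    MonoidAlgebra R G →+ (Quotient (QuotientGroup.rightRel H) →₀ R) :=
  (Finsupp.mapDomain.addMonoidHom (Quotient.mk _)).comp MonoidAlgebra.coeffAddEquiv.toAddMonoidHom

variable {H : Subgroup G}

theorem cosetSum_single (g : G) (r : R) :
    cosetSum H (MonoidAlgebra.single g r) = Finsupp.single (Quotient.mk _ g) r := by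
  simp [cosetSum]

/-- Left multiplication by an element normalizing `H`, as a self-map of `H\G`. -/
def rightCosetMulLeft {w : G} (hw : w ∈ Subgroup.normalizer (H : Set G)) :
    Quotient (QuotientGroup.rightRel H) → Quotient (QuotientGroup.rightRel H) :=
  Quotient.map (w * ·) fun a b hab => by
    have hconj : w * b * (w * a)⁻¹ = w * (b * a⁻¹) * w⁻¹ := by group
    refine QuotientGroup.rightRel_apply.2 ?_
    rw [hconj]
    exact (Subgroup.mem_normalizer_iff.1 hw _).1 (QuotientGroup.rightRel_apply.1 hab)

theorem rightCosetMulLeft_injective {w : G} (hw : w ∈ Subgroup.normalizer (H : Set G)) :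
    Function.Injective (rightCosetMulLeft hw) := by
  have hinv : Function.LeftInverse (rightCosetMulLeft (inv_mem hw)) (rightCosetMulLeft hw) := by
    rintro ⟨g⟩
    exact congrArg (Quotient.mk _) (inv_mul_cancel_left w g)
  exact hinv.injective

theorem rightCosetMulLeft_iterate_mk {w : G} (hw : w ∈ Subgroup.normalizer (H : Set G)) (n : ℕ)
    (g : G) : (rightCosetMulLeft hw)^[n] (Quotient.mk _ g) = Quotient.mk _ (w ^ n * g) := by
  rw [← mul_left_iterate_apply]
  exact (Function.Semiconj.iterate_right (f := Quotient.mk _) (fun _ => rfl) n g).symm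

theorem notMem_periodicPts_rightCosetMulLeft {w : G} (hw : w ∈ Subgroup.normalizer (H : Set G))
    (hpow : ∀ n > 0, w ^ n ∉ H) (q : Quotient (QuotientGroup.rightRel H)) :
    q ∉ Function.periodicPts (rightCosetMulLeft hw) := by
  rintro ⟨n, hn, hq⟩
  obtain ⟨g, rfl⟩ := Quotient.exists_rep q
  have hrel := Quotient.exact ((rightCosetMulLeft_iterate_mk hw n g).symm.trans hq).symm
  refine hpow n hn ?_
  rw [← mul_inv_cancel_right (w ^ n) g]
  exact QuotientGroup.rightRel_apply.1 hrel

theorem cosetSum_of_mul {w : G} (hw : w ∈ Subgroup.normalizer (H : Set G))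
    (x : MonoidAlgebra R G) :
    cosetSum H (MonoidAlgebra.of R G w * x) =
      (cosetSum H x).mapDomain (rightCosetMulLeft hw) := by
  induction x using MonoidAlgebra.induction_linear with
  | zero => simp
  | add x y hx hy => rw [mul_add, map_add, hx, hy, map_add, Finsupp.mapDomain_add]
  | single g r =>
    rw [MonoidAlgebra.of_apply, MonoidAlgebra.single_mul_single, one_mul, cosetSum_single,
      cosetSum_single, Finsupp.mapDomain_single]
    rfl

theorem cosetSum_augGen_mul_of_mem {h : G} (hh : h ∈ H) (x : MonoidAlgebra R G) :
    cosetSum H (augGen R h * x) = 0 := by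
  have hfix : rightCosetMulLeft (Subgroup.le_normalizer hh) = id := by
    funext q
    obtain ⟨g, rfl⟩ := Quotient.exists_rep q
    refine (Quotient.sound (QuotientGroup.rightRel_apply.2 ?_)).symm
    rwa [mul_inv_cancel_right]
  rw [augGen, sub_mul, one_mul, map_sub, cosetSum_of_mul (Subgroup.le_normalizer hh), hfix,
    Finsupp.mapDomain_id, sub_self]

theorem cosetSum_eq_zero_of_augGen_mul {w : G} (hw : w ∈ Subgroup.normalizer (H : Set G))
    (hpow : ∀ n > 0, w ^ n ∉ H) {x : MonoidAlgebra R G} (hx : cosetSum H (augGen R w * x) = 0) :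
    cosetSum H x = 0 := by
  have hinj := rightCosetMulLeft_injective hw
  rw [augGen, sub_mul, one_mul, map_sub, cosetSum_of_mul hw, sub_eq_zero] at hx
  refine finsupp_eq_zero_of_comp_eq_self hinj (notMem_periodicPts_rightCosetMulLeft hw hpow)
    fun q => ?_
  rw [← Finsupp.mapDomain_apply hinj (cosetSum H x) q, hx]

theorem augGen_dvd_iff_cosetSum_eq_zero {v : G} {x : MonoidAlgebra R G} :
    augGen R v ∣ x ↔ cosetSum (Subgroup.zpowers v) x = 0 := by
  refine ⟨?_, fun hx => ?_⟩
  · rintro ⟨y, rfl⟩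
    exact cosetSum_augGen_mul_of_mem (Subgroup.mem_zpowers v) y
  have hsection (y : MonoidAlgebra R G) : augGen R v ∣
      y - .ofCoeff ((cosetSum (Subgroup.zpowers v) y).mapDomain Quotient.out) := by
    induction y using MonoidAlgebra.induction_linear with
    | zero => simp
    | add y z hy hz =>
      rw [map_add, Finsupp.mapDomain_add, MonoidAlgebra.ofCoeff_add, add_sub_add_comm]
      exact dvd_add hy hz
    | single g r =>
      rw [cosetSum_single, Finsupp.mapDomain_single, MonoidAlgebra.ofCoeff_single]
      set s := (Quotient.mk (QuotientGroup.rightRel (Subgroup.zpowers v)) g).out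
      have hmem : g * s⁻¹ ∈ Subgroup.zpowers v :=
        QuotientGroup.rightRel_apply.1 (Quotient.exact (Quotient.out_eq _))
      have heq : MonoidAlgebra.single g r - MonoidAlgebra.single s r =
          augGen R (g * s⁻¹) * MonoidAlgebra.single s r := by
        rw [augGen, sub_mul, one_mul, MonoidAlgebra.of_apply, MonoidAlgebra.single_mul_single,
          one_mul, inv_mul_cancel_right]
      rw [heq]
      exact (augGen_dvd_augGen_of_mem_zpowers hmem).mul_right _
  simpa [hx] using hsection x

theorem augGen_dvd_of_dvd_augGen_mul {v w : G} (hvw : Commute v w)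
    (hpow : ∀ n > 0, w ^ n ∉ Subgroup.zpowers v) {x : MonoidAlgebra R G}
    (h : augGen R v ∣ augGen R w * x) : augGen R v ∣ x := by
  have hw : w ∈ Subgroup.normalizer (Subgroup.zpowers v : Set G) := by
    refine Subgroup.centralizer_le_normalizer _ ?_
    rw [Subgroup.zpowers_eq_closure, Subgroup.centralizer_closure,
      Subgroup.mem_centralizer_singleton_iff]
    exact hvw.symm
  rw [augGen_dvd_iff_cosetSum_eq_zero] at h ⊢
  exact cosetSum_eq_zero_of_augGen_mul hw hpow h

theorem augGen_isLeftRegular {w : G} (hw : ¬IsOfFinOrder w) : IsLeftRegular (augGen R w) := by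
  refine isLeftRegular_iff_right_eq_zero_of_mul.2 fun x hx => ?_
  have hdvd : augGen R (1 : G) ∣ x := by
    refine augGen_dvd_of_dvd_augGen_mul (Commute.one_left w) (fun n hn hmem => hw ?_)
      (hx ▸ dvd_zero _)
    rw [Subgroup.zpowers_one_eq_bot, Subgroup.mem_bot] at hmem
    exact isOfFinOrder_iff_pow_eq_one.2 ⟨n, hn, hmem⟩
  rwa [augGen_one, zero_dvd_iff] at hdvd

end Augmentation

section CrossedHom

variable {G : Type} [Group G] {M : Type*} [AddCommGroup M] [Module (GroupRing G) M]

/-- A crossed homomorphism from `G` to a left `ℤ[G]`-module: a map satisfying the `1`-cocycle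
condition, with values written as a function of a group element rather than of a `1`-tuple. -/
def IsCrossedHom (d : G → M) : Prop :=
  ∀ g h, d (g * h) = d g + MonoidAlgebra.of ℤ G g • d h

theorem isCrossedHom_augGen_smul (m : M) : IsCrossedHom fun g : G => augGen ℤ g • m := by
  intro g h
  simp only [augGen_mul, add_smul, mul_smul]

namespace IsCrossedHom

variable {d e : G → M}

theorem map_one (hd : IsCrossedHom d) : d 1 = 0 := by
  have h := hd 1 1
  rwa [mul_one, _root_.map_one, one_smul, left_eq_add] at h

theorem map_inv (hd : IsCrossedHom d) (g : G) : d g⁻¹ = -(MonoidAlgebra.of ℤ G g⁻¹ • d g) := by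
  rw [eq_neg_iff_add_eq_zero, ← hd, inv_mul_cancel, hd.map_one]

theorem eq_of_eqOn (hd : IsCrossedHom d) (he : IsCrossedHom e) {s : Set G}
    (hs : Subgroup.closure s = ⊤) (h : Set.EqOn d e s) : d = e := by
  funext g
  have hg : g ∈ Subgroup.closure s := hs ▸ Subgroup.mem_top g
  induction hg using Subgroup.closure_induction with
  | mem g hg => exact h hg
  | one => rw [hd.map_one, he.map_one]
  | mul g k _ _ hg hk => rw [hd, he, hg, hk]
  | inv g _ hg => rw [hd.map_inv, he.map_inv, hg]

theorem augGen_smul_comm (hd : IsCrossedHom d) {g h : G} (hgh : Commute g h) :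
    augGen ℤ g • d h = augGen ℤ h • d g := by
  have hmul : d g + MonoidAlgebra.of ℤ G g • d h = d h + MonoidAlgebra.of ℤ G h • d g := by
    rw [← hd, ← hd, hgh.eq]
  rw [augGen, augGen, sub_smul, sub_smul, one_smul, one_smul, sub_eq_sub_iff_add_eq_add,
    add_comm, hmul, add_comm]

theorem linearCombination_mul_augGen (hd : IsCrossedHom d) (x : GroupRing G) (g : G) :
    Finsupp.linearCombination ℤ d (x * augGen ℤ g).coeff = x • d g := by
  induction x using MonoidAlgebra.induction_linear with
  | zero => simp
  | add x y hx hy => rw [add_mul, MonoidAlgebra.coeff_add, map_add, hx, hy, add_smul]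
  | single h n =>
    have hsmul : (MonoidAlgebra.single h n : GroupRing G) • d g =
        n • MonoidAlgebra.of ℤ G h • d g := by
      rw [← smul_assoc, MonoidAlgebra.of_apply, MonoidAlgebra.smul_single, smul_eq_mul, mul_one]
    rw [augGen, mul_sub, mul_one, MonoidAlgebra.of_apply, MonoidAlgebra.single_mul_single, mul_one,
      MonoidAlgebra.coeff_sub, map_sub, MonoidAlgebra.coeff_single, MonoidAlgebra.coeff_single,
      Finsupp.linearCombination_single, Finsupp.linearCombination_single, hd, smul_add,
      add_sub_cancel_left, hsmul]

end IsCrossedHom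

variable (G M) in
/-- The action of `G` on a `ℤ[G]`-module, by automorphisms of the additive group written
multiplicatively, as needed to form the semidirect product of the module with `G`. -/
noncomputable def groupRingMulAut : G →* MulAut (Multiplicative M) :=
  letI := DistribMulAction.compHom M (MonoidAlgebra.of ℤ G)
  (MulAutMultiplicative M).symm.toMonoidHom.comp (DistribMulAction.toAddAut G M)

theorem toAdd_groupRingMulAut_apply (g : G) (m : Multiplicative M) :
    (groupRingMulAut G M g m).toAdd = MonoidAlgebra.of ℤ G g • m.toAdd :=
  rfl

theorem isCrossedHom_of_rightHom_comp_eq_id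
    {s : G →* Multiplicative M ⋊[groupRingMulAut G M] G}
    (hs : SemidirectProduct.rightHom.comp s = MonoidHom.id G) :
    IsCrossedHom fun g => (s g).left.toAdd := by
  intro g h
  have hright : (s g).right = g := DFunLike.congr_fun hs g
  simp only [map_mul, SemidirectProduct.mul_left, toAdd_mul, toAdd_groupRingMulAut_apply, hright]

end CrossedHom

section FirstCohomology

variable {G : Type} [Group G]

theorem cochainD_zero_apply {M : Type} [AddCommGroup M] [Module (GroupRing G) M]
    (c : (Fin 0 → G) → M) (g : Fin 1 → G) :
    cochainD G M 0 c g = augGen ℤ (g 0) • c default := by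
  simp only [cochainD, AddMonoidHom.coe_mk, ZeroHom.coe_mk,
    Subsingleton.elim _ (default : Fin 0 → G)]
  rw [Fin.sum_univ_one, augGen, sub_smul, one_smul, sub_eq_add_neg, MonoidAlgebra.of_apply]
  simp

theorem cochainD_one_apply {M : Type} [AddCommGroup M] [Module (GroupRing G) M]
    (c : (Fin 1 → G) → M) (g : Fin 2 → G) :
    cochainD G M 1 c g = MonoidAlgebra.of ℤ G (g 0) • c (fun _ => g 1)
      - c (fun _ => g 0 * g 1) + c (fun _ => g 0) := by
  have htail : (fun i : Fin 1 => g i.succ) = fun _ => g 1 := by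
    funext i; fin_cases i; rfl
  have hmul : Fin.contractNth 0 (· * ·) g = fun _ : Fin 1 => g 0 * g 1 := by
    funext i; fin_cases i; rfl
  have hinit : Fin.contractNth 1 (· * ·) g = fun _ : Fin 1 => g 0 := by
    funext i; fin_cases i; rfl
  simp only [cochainD, AddMonoidHom.coe_mk, ZeroHom.coe_mk, htail]
  rw [Fin.sum_univ_two, hmul, hinit]
  simp [sub_eq_add_neg, add_assoc]

variable (G)

/-- The right `ℤ[G]`-module of crossed homomorphisms `G → ℤ[G]`. -/
noncomputable def crossedHoms : Submodule (GroupRing G)ᵐᵒᵖ (G → GroupRing G) where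
  carrier := {d | IsCrossedHom d}
  zero_mem' g h := by simp only [Pi.zero_apply, smul_zero, add_zero]
  add_mem' {d e} hd he g h := by
    simp only [Pi.add_apply, hd g h, he g h, smul_add]
    abel
  smul_mem' a d hd g h := by
    simp only [Pi.smul_apply, hd g h, smul_add, smul_comm a]

/-- The map sending `x` to the principal crossed homomorphism `g ↦ (g - 1) x`. -/
noncomputable def principalCrossedHom : GroupRing G →ₗ[(GroupRing G)ᵐᵒᵖ] crossedHoms G where
  toFun x := ⟨fun g => augGen ℤ g * x, isCrossedHom_augGen_smul x⟩
  map_add' x y := by ext1; funext g; exact mul_add _ _ _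
  map_smul' a x := by ext1; funext g; exact mul_smul_comm a _ _

variable {G}

theorem mem_crossedHoms {d : G → GroupRing G} : d ∈ crossedHoms G ↔ IsCrossedHom d :=
  Iff.rfl

theorem principalCrossedHom_apply (x : GroupRing G) (g : G) :
    (principalCrossedHom G x).1 g = augGen ℤ g * x :=
  rfl

/-- Evaluation of crossed homomorphisms `G → ℤ[G]` at `g`. -/
noncomputable def evalAt (g : G) : crossedHoms G →ₗ[(GroupRing G)ᵐᵒᵖ] GroupRing G :=
  LinearMap.proj g ∘ₗ (crossedHoms G).subtype

theorem evalAt_apply (g : G) (d : crossedHoms G) : evalAt g d = d.1 g :=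
  rfl

variable (G)

/-- The identification of functions on `G` with inhomogeneous `1`-cochains. -/
noncomputable def oneCochainEquiv :
    (G → GroupRing G) ≃ₗ[(GroupRing G)ᵐᵒᵖ] ((Fin 1 → G) → GroupRing G) :=
  LinearEquiv.funCongrLeft _ _ (Equiv.funUnique (Fin 1) G)

theorem map_oneCochainEquiv_crossedHoms :
    (crossedHoms G).map (oneCochainEquiv G).toLinearMap = cocyclesΛ G 1 := by
  ext c
  obtain ⟨d, rfl⟩ := (oneCochainEquiv G).surjective c
  have hcochain (g : Fin 2 → G) : cochainDOp G 1 (oneCochainEquiv G d) g =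
      MonoidAlgebra.of ℤ G (g 0) • d (g 1) - d (g 0 * g 1) + d (g 0) :=
    cochainD_one_apply _ g
  have hcocycle (g : Fin 2 → G) : cochainDOp G 1 (oneCochainEquiv G d) g = 0 ↔
      d (g 0 * g 1) = d (g 0) + MonoidAlgebra.of ℤ G (g 0) • d (g 1) := by
    rw [hcochain, sub_add_eq_add_sub, sub_eq_zero, eq_comm, add_comm]
  rw [Submodule.mem_map_equiv, LinearEquiv.symm_apply_apply, mem_crossedHoms, cocyclesΛ,
    LinearMap.mem_ker, funext_iff]
  exact ⟨fun hd g => (hcocycle g).2 (hd _ _), fun hd g h => (hcocycle ![g, h]).1 (hd _)⟩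

/-- The identification of crossed homomorphisms with inhomogeneous `1`-cocycles. -/
noncomputable def crossedHomsEquivCocycles :
    crossedHoms G ≃ₗ[(GroupRing G)ᵐᵒᵖ] cocyclesΛ G 1 :=
  (oneCochainEquiv G).ofSubmodules _ _ (map_oneCochainEquiv_crossedHoms G)

theorem map_crossedHomsEquivCocycles_range_principalCrossedHom :
    (LinearMap.range (principalCrossedHom G)).map (crossedHomsEquivCocycles G).toLinearMap =
      (coboundariesΛ G 1).comap (cocyclesΛ G 1).subtype := by
  have hcochain (c : (Fin 0 → G) → GroupRing G) :
      cochainDOp G 0 c = crossedHomsEquivCocycles G (principalCrossedHom G (c default)) :=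
    funext fun g => cochainD_zero_apply c g
  ext c
  rw [← LinearMap.range_comp, LinearMap.mem_range, Submodule.mem_comap]
  constructor
  · rintro ⟨x, rfl⟩
    exact ⟨fun _ => x, hcochain _⟩
  · rintro ⟨f, hf⟩
    exact ⟨f default, Subtype.ext ((hcochain f).symm.trans hf)⟩

/-- `H¹(G; ℤ[G])` as crossed homomorphisms modulo principal ones. -/
noncomputable def groupCohΛOneEquiv :
    (crossedHoms G ⧸ LinearMap.range (principalCrossedHom G)) ≃ₗ[(GroupRing G)ᵐᵒᵖ] groupCohΛ G 1 :=
  Submodule.Quotient.equiv _ _ (crossedHomsEquivCocycles G)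
    (map_crossedHomsEquivCocycles_range_principalCrossedHom G)

theorem exists_dual_groupCohΛ_one_ne_zero_iff :
    (∃ f : groupCohΛ G 1 →ₗ[(GroupRing G)ᵐᵒᵖ] GroupRing G, f ≠ 0) ↔
      ∃ F : crossedHoms G →ₗ[(GroupRing G)ᵐᵒᵖ] GroupRing G,
        F ∘ₗ principalCrossedHom G = 0 ∧ F ≠ 0 := by
  constructor
  · rintro ⟨f, hf⟩
    refine ⟨f ∘ₗ (groupCohΛOneEquiv G).toLinearMap ∘ₗ Submodule.mkQ _, ?_, fun h => hf ?_⟩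
    · rw [LinearMap.comp_assoc, LinearMap.comp_assoc, LinearMap.range_mkQ_comp,
        LinearMap.comp_zero, LinearMap.comp_zero]
    · ext1 c
      obtain ⟨q, rfl⟩ := (groupCohΛOneEquiv G).surjective c
      obtain ⟨d, rfl⟩ := Submodule.mkQ_surjective _ q
      exact LinearMap.congr_fun h d
  · rintro ⟨F, hprincipal, hF⟩
    refine ⟨Submodule.liftQ _ F (LinearMap.range_le_ker_iff.2 hprincipal) ∘ₗ
      (groupCohΛOneEquiv G).symm.toLinearMap, fun h => hF ?_⟩
    ext1 d
    have hd := LinearMap.congr_fun h (groupCohΛOneEquiv G (Submodule.mkQ _ d))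
    rwa [LinearMap.comp_apply, LinearEquiv.coe_coe, LinearEquiv.symm_apply_apply] at hd

end FirstCohomology

namespace RAAGroup

variable {V : Type} {Γ : SimpleGraph V}

theorem closure_range_of : Subgroup.closure (Set.range (of : V → RAAGroup V Γ)) = ⊤ :=
  PresentedGroup.closure_range_of _

theorem commute_of_adj {v w : V} (h : Γ.Adj v w) : Commute (of v : RAAGroup V Γ) (of w) := by
  have hrel := PresentedGroup.one_of_mem (rels := raagRels V Γ) ⟨v, w, h, rfl⟩
  simp only [map_mul, map_inv] at hrel
  rwa [mul_inv_eq_one, mul_inv_eq_iff_eq_mul] at hrel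

section Lift

variable {H : Type*} [Group H] (f : V → H) (hf : ∀ v w, Γ.Adj v w → Commute (f v) (f w))

/-- The homomorphism determined by images of the generators that commute along edges: the
universal property of the right-angled Artin group. -/
def lift : RAAGroup V Γ →* H :=
  PresentedGroup.toGroup (f := f) (rels := raagRels V Γ) <| by
    rintro _ ⟨v, w, h, rfl⟩
    simp [(hf v w h).eq]

theorem lift_of (v : V) : lift f hf (of v) = f v :=
  PresentedGroup.toGroup.of _

end Lift

theorem hom_ext {H : Type*} [Group H] {φ ψ : RAAGroup V Γ →* H}
    (h : ∀ v, φ (of v) = ψ (of v)) : φ = ψ :=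
  PresentedGroup.ext h

/-- The homomorphism to `ℤ` counting the exponent of each generator `v` with weight `f v`. -/
def weightedExponentSum (f : V → ℤ) : RAAGroup V Γ →* Multiplicative ℤ :=
  lift (fun v => Multiplicative.ofAdd (f v)) fun _ _ _ => Commute.all _ _

theorem weightedExponentSum_of (f : V → ℤ) (v : V) :
    weightedExponentSum f (of v : RAAGroup V Γ) = Multiplicative.ofAdd (f v) :=
  lift_of _ _ v

theorem not_isOfFinOrder_of (v : V) : ¬IsOfFinOrder (of v : RAAGroup V Γ) := by
  intro h
  have hsum := (weightedExponentSum (Γ := Γ) 1).isOfFinOrder h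
  rw [weightedExponentSum_of, isOfFinOrder_iff_eq_one, Pi.one_apply, ofAdd_eq_one] at hsum
  exact one_ne_zero hsum

theorem of_pow_notMem_zpowers {v w : V} (hvw : v ≠ w) {n : ℕ} (hn : 0 < n) :
    (of w : RAAGroup V Γ) ^ n ∉ Subgroup.zpowers (of v) := by
  classical
  rintro ⟨m, hm⟩
  have hsum := congrArg (weightedExponentSum (Pi.single w 1)) hm
  rw [map_zpow, map_pow, weightedExponentSum_of, weightedExponentSum_of,
    Pi.single_eq_of_ne hvw, Pi.single_eq_same, ofAdd_zero, one_zpow, ← ofAdd_nsmul,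
    eq_comm, ofAdd_eq_one, nsmul_one, Nat.cast_eq_zero] at hsum
  exact hn.ne' hsum

theorem isLeftRegular_augGen_of (v : V) : IsLeftRegular (augGen ℤ (of v : RAAGroup V Γ)) :=
  augGen_isLeftRegular (not_isOfFinOrder_of v)

section CrossedLift

variable {M : Type*} [AddCommGroup M] [Module (GroupRing (RAAGroup V Γ)) M] (t : V → M)
  (ht : ∀ v w, Γ.Adj v w →
    augGen ℤ (of v : RAAGroup V Γ) • t w = augGen ℤ (of w : RAAGroup V Γ) • t v)

/-- The section of `M ⋊ RAAGroup V Γ → RAAGroup V Γ` taking each generator `v` to `(t v, v)`. -/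
noncomputable def semidirectLift :
    RAAGroup V Γ →* Multiplicative M ⋊[groupRingMulAut (RAAGroup V Γ) M] RAAGroup V Γ :=
  lift (fun v => ⟨Multiplicative.ofAdd (t v), of v⟩) fun v w h => by
    have hsmul := ht v w h
    rw [augGen, augGen, sub_smul, sub_smul, one_smul, one_smul, sub_eq_sub_iff_add_eq_add,
      add_comm, add_comm _ (t w)] at hsmul
    exact SemidirectProduct.ext hsmul (commute_of_adj h)

theorem semidirectLift_of (v : V) :
    semidirectLift t ht (of v) = ⟨Multiplicative.ofAdd (t v), of v⟩ :=
  lift_of _ _ v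

/-- The crossed homomorphism with prescribed values on the generators. -/
noncomputable def crossedLift (g : RAAGroup V Γ) : M :=
  (semidirectLift t ht g).left.toAdd

theorem isCrossedHom_crossedLift : IsCrossedHom (crossedLift t ht) :=
  isCrossedHom_of_rightHom_comp_eq_id <| hom_ext fun v => by
    rw [MonoidHom.comp_apply, semidirectLift_of, SemidirectProduct.rightHom_eq_right,
      MonoidHom.id_apply]

theorem crossedLift_of (v : V) : crossedLift t ht (of v) = t v := by
  rw [crossedLift, semidirectLift_of, toAdd_ofAdd]

end CrossedLift

section Edge

variable {v w : V}

theorem augGen_of_dvd_of_adj {d : RAAGroup V Γ → GroupRing (RAAGroup V Γ)} (hd : IsCrossedHom d)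
    (h : Γ.Adj v w) : augGen ℤ (of v) ∣ d (of v) := by
  refine augGen_dvd_of_dvd_augGen_mul (commute_of_adj h)
    (fun n hn => of_pow_notMem_zpowers h.ne hn) ⟨d (of w), ?_⟩
  exact (hd.augGen_smul_comm (commute_of_adj h)).symm

theorem apply_of_eq_zero_of_reachable {d : RAAGroup V Γ → GroupRing (RAAGroup V Γ)}
    (hd : IsCrossedHom d) (h : Γ.Reachable v w) (hv : d (of v) = 0) : d (of w) = 0 := by
  obtain ⟨p⟩ := h
  induction p with
  | nil => exact hv
  | cons hadj _ ih =>
    have hcomm := hd.augGen_smul_comm (commute_of_adj hadj)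
    rw [hv, smul_zero] at hcomm
    exact ih ((isLeftRegular_augGen_of _).mul_left_eq_zero_iff.1 hcomm)

theorem isCompl_range_principalCrossedHom_ker_evalAt (h : Γ.Adj v w) :
    IsCompl (LinearMap.range (principalCrossedHom (RAAGroup V Γ)))
      (LinearMap.ker (evalAt (of v))) := by
  constructor
  · rw [Submodule.disjoint_def]
    rintro _ ⟨x, rfl⟩ hx
    rw [(isLeftRegular_augGen_of v).mul_left_eq_zero_iff.1 hx, map_zero]
  · rw [Submodule.codisjoint_iff_exists_add_eq]
    intro d
    obtain ⟨x, hx⟩ := augGen_of_dvd_of_adj d.2 h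
    refine ⟨principalCrossedHom _ x, d - principalCrossedHom _ x, LinearMap.mem_range_self _ x, ?_,
      add_sub_cancel _ _⟩
    rw [LinearMap.mem_ker, map_sub, evalAt_apply, evalAt_apply, principalCrossedHom_apply, hx,
      sub_self]

theorem ker_evalAt_of_eq_bot (hΓ : Γ.Preconnected) (v : V) :
    LinearMap.ker (evalAt (of v : RAAGroup V Γ)) = ⊥ := by
  refine (Submodule.eq_bot_iff _).2 fun d hd => Subtype.ext ?_
  refine IsCrossedHom.eq_of_eqOn d.2 (crossedHoms _).zero_mem closure_range_of ?_
  rintro _ ⟨w, rfl⟩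
  exact apply_of_eq_zero_of_reachable d.2 (hΓ v w) hd

theorem range_principalCrossedHom_eq_top (hΓ : Γ.Preconnected) (h : Γ.Adj v w) :
    LinearMap.range (principalCrossedHom (RAAGroup V Γ)) = ⊤ := by
  have hcompl := isCompl_range_principalCrossedHom_ker_evalAt h
  rw [ker_evalAt_of_eq_bot hΓ] at hcompl
  exact eq_top_of_isCompl_bot hcompl

theorem exists_evalAt_eq_zero_and_ne_zero {u : V} (hu : ¬Γ.Reachable v u) :
    ∃ d : crossedHoms (RAAGroup V Γ), evalAt (of v) d = 0 ∧ evalAt (of u) d ≠ 0 := by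
  classical
  let t (x : V) : GroupRing (RAAGroup V Γ) := if Γ.Reachable v x then 0 else augGen ℤ (of x)
  have ht (x y : V) (hxy : Γ.Adj x y) :
      augGen ℤ (of x : RAAGroup V Γ) • t y = augGen ℤ (of y : RAAGroup V Γ) • t x := by
    have hiff : Γ.Reachable v x ↔ Γ.Reachable v y :=
      ⟨fun hx => hx.trans hxy.reachable, fun hy => hy.trans hxy.symm.reachable⟩
    by_cases hx : Γ.Reachable v x
    · simp only [t, if_pos hx, if_pos (hiff.1 hx), smul_zero]
    · simp only [t, if_neg hx, if_neg (hiff.not.1 hx), smul_eq_mul]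
      exact commute_augGen (commute_of_adj hxy)
  refine ⟨⟨crossedLift t ht, mem_crossedHoms.2 (isCrossedHom_crossedLift t ht)⟩, ?_, ?_⟩
  · exact (crossedLift_of t ht v).trans (if_pos (.refl v))
  · have heval := (crossedLift_of t ht u).trans (if_neg hu)
    exact heval.trans_ne (isLeftRegular_augGen_of u).ne_zero

theorem exists_dual_ne_zero_of_adj (h : Γ.Adj v w) (hΓ : ¬Γ.Connected) :
    ∃ F : crossedHoms (RAAGroup V Γ) →ₗ[(GroupRing (RAAGroup V Γ))ᵐᵒᵖ]
      GroupRing (RAAGroup V Γ), F ∘ₗ principalCrossedHom _ = 0 ∧ F ≠ 0 := by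
  obtain ⟨u, hu⟩ : ∃ u, ¬Γ.Reachable v u := by
    rw [SimpleGraph.connected_iff_exists_forall_reachable] at hΓ
    push Not at hΓ
    exact hΓ v
  obtain ⟨d, hdv, hdu⟩ := exists_evalAt_eq_zero_and_ne_zero hu
  have hcompl := (isCompl_range_principalCrossedHom_ker_evalAt h).symm
  refine ⟨evalAt (of u) ∘ₗ Submodule.projection _ _ hcompl, ?_, fun hF => hdu ?_⟩
  · rw [LinearMap.comp_assoc, LinearMap.range_le_ker_iff.1 (Submodule.ker_projection hcompl).ge,
      LinearMap.comp_zero]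
  · rw [← Submodule.projection_apply_of_mem_left hcompl hdv]
    exact LinearMap.congr_fun hF d

end Edge

section Free

/-- The Fox derivative `∂/∂v` on the free group `RAAGroup V ⊥`: the crossed homomorphism equal to
`1` at `v` and to `0` at the other generators. -/
noncomputable def foxDerivative [DecidableEq V] (v : V) : crossedHoms (RAAGroup V ⊥) :=
  ⟨crossedLift (Pi.single v 1) fun _ _ h => h.elim,
    mem_crossedHoms.2 (isCrossedHom_crossedLift _ _)⟩

theorem foxDerivative_of [DecidableEq V] (v w : V) :
    (foxDerivative v).1 (of w) = Pi.single (M := fun _ => GroupRing (RAAGroup V ⊥)) v 1 w :=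
  crossedLift_of _ _ w

theorem linearIndependent_augGen_of :
    LinearIndependent (GroupRing (RAAGroup V ⊥)) fun v => augGen ℤ (of v : RAAGroup V ⊥) := by
  classical
  refine linearIndependent_iff'.2 fun s x hx v hv => ?_
  let D := Finsupp.linearCombination ℤ (foxDerivative v).1
  calc x v = ∑ w ∈ s, x w • (foxDerivative v).1 (of w) := by
        simp [foxDerivative_of, Pi.single_apply, hv]
    _ = ∑ w ∈ s, D (x w • augGen ℤ (of w)).coeff :=
        Finset.sum_congr rfl fun w _ =>
          ((foxDerivative v).2.linearCombination_mul_augGen (x w) (of w)).symm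
    _ = D (∑ w ∈ s, x w • augGen ℤ (of w)).coeff := by rw [MonoidAlgebra.coeff_sum, map_sum]
    _ = 0 := by rw [hx, MonoidAlgebra.coeff_zero, map_zero]

theorem eq_sum_smul_foxDerivative [Fintype V] [DecidableEq V] (d : crossedHoms (RAAGroup V ⊥)) :
    d = ∑ v, MulOpposite.op (d.1 (of v)) • foxDerivative v := by
  refine Subtype.ext (IsCrossedHom.eq_of_eqOn d.2 (Subtype.property _) closure_range_of ?_)
  rintro _ ⟨w, rfl⟩
  simp [foxDerivative_of, Pi.single_apply]

theorem dual_bot_eq_zero_of_comp_principalCrossedHom_eq_zero [Finite V]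
    {F : crossedHoms (RAAGroup V ⊥) →ₗ[(GroupRing (RAAGroup V ⊥))ᵐᵒᵖ] GroupRing (RAAGroup V ⊥)}
    (hF : F ∘ₗ principalCrossedHom _ = 0) : F = 0 := by
  classical
  cases nonempty_fintype V
  have hexpand (d : crossedHoms (RAAGroup V ⊥)) :
      F d = ∑ v, F (foxDerivative v) * d.1 (of v) := by
    conv_lhs => rw [eq_sum_smul_foxDerivative d, map_sum]
    exact Finset.sum_congr rfl fun v _ => map_smul F _ _
  have hprincipal : ∑ v, F (foxDerivative v) • augGen ℤ (of v : RAAGroup V ⊥) = 0 := by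
    have hone := hexpand (principalCrossedHom _ 1)
    simp only [principalCrossedHom_apply, mul_one] at hone
    exact hone.symm.trans (LinearMap.congr_fun hF 1)
  have hfox := Fintype.linearIndependent_iff.1 linearIndependent_augGen_of _ hprincipal
  ext1 d
  rw [hexpand d, LinearMap.zero_apply]
  exact Finset.sum_eq_zero fun v _ => by rw [hfox, zero_mul]

end Free

end RAAGroup

/-- Let `π` be a right-angled Artin group with defining graph `Γ`. Then
`Hom_Λ(H¹(π; Λ), Λ) ≠ 0` if and only if `Γ` is disconnected and contains at least one edge. -/
theorem statement9 (V : Type) [Fintype V] [DecidableEq V] (Γ : SimpleGraph V) :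
    (∃ f : groupCohΛ (RAAGroup V Γ) 1 →ₗ[(GroupRing (RAAGroup V Γ))ᵐᵒᵖ]
        GroupRing (RAAGroup V Γ), f ≠ 0) ↔
      (¬ Γ.Connected ∧ ∃ v w : V, Γ.Adj v w) := by
  rw [exists_dual_groupCohΛ_one_ne_zero_iff]
  constructor
  · rintro ⟨F, hprincipal, hF⟩
    have hedge : ∃ v w, Γ.Adj v w := by
      by_contra! hnone
      obtain rfl := SimpleGraph.eq_bot_iff_forall_not_adj.2 hnone
      exact hF (RAAGroup.dual_bot_eq_zero_of_comp_principalCrossedHom_eq_zero hprincipal)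
    refine ⟨fun hconn => hF ?_, hedge⟩
    obtain ⟨v, w, hvw⟩ := hedge
    have hsurj := LinearMap.range_eq_top.1
      (RAAGroup.range_principalCrossedHom_eq_top hconn.preconnected hvw)
    exact (LinearMap.cancel_right hsurj).1 hprincipal
  · rintro ⟨hdisconn, v, w, hvw⟩
    exact RAAGroup.exists_dual_ne_zero_of_adj hvw hdisconn
end

section
/- Let Λ be a ring with involution, B a right Λ-module, and s a hermitian form on B such that the dualized adjoint (ad s)* : (B*)* → B* is bijective. Then the sesquilinear form h on B* defined by h(x, y) = ((ad s)*)^{-1}(x)(y) is hermitian. -/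
section RightModules

variable (Λ : Type) [Ring Λ] [StarRing Λ]

/-- The scalar action of `Λᵐᵒᵖ` on the dual `B* = Hom_Λ(B, Λ)` of a right `Λ`-module `B`
(right `Λ`-modules are left `Λᵐᵒᵖ`-modules), given by `(v·λ)(b) = λ̄·v(b)`. -/
noncomputable def rdualSmulFun {B : Type} [AddCommGroup B] [Module Λᵐᵒᵖ B]
    (a : Λᵐᵒᵖ) (v : B →ₗ[Λᵐᵒᵖ] Λ) : B →ₗ[Λᵐᵒᵖ] Λ where
  toFun b := star a.unop * v b
  map_add' x y := by simp [mul_add]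
  map_smul' c x := by simp [MulOpposite.smul_eq_mul_unop, mul_assoc]

/-- The dual `B* = Hom_Λ(B, Λ)` of a right `Λ`-module `B` is a right `Λ`-module via
`(v·λ)(b) = λ̄·v(b)`, where `λ ↦ λ̄` is the involution of `Λ`. -/
noncomputable instance rdualModule {B : Type} [AddCommGroup B] [Module Λᵐᵒᵖ B] :
    Module Λᵐᵒᵖ (B →ₗ[Λᵐᵒᵖ] Λ) where
  smul := rdualSmulFun Λ
  one_smul v := by
    ext b; show star (1 : Λᵐᵒᵖ).unop * v b = v b; simp
  mul_smul a b v := by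
    ext x
    show star (a * b).unop * v x = star a.unop * (star b.unop * v x)
    simp [star_mul, mul_assoc]
  smul_zero a := by
    ext x; show star a.unop * (0 : B →ₗ[Λᵐᵒᵖ] Λ) x = 0; simp
  smul_add a v w := by
    ext x
    show star a.unop * (v + w) x = star a.unop * v x + star a.unop * w x
    simp [mul_add]
  add_smul a b v := by
    ext x
    show star (a + b).unop * v x = star a.unop * v x + star b.unop * v x
    simp [add_mul]
  zero_smul v := by
    ext x; show star (0 : Λᵐᵒᵖ).unop * v x = 0; simp

@[simp] lemma rdual_smul_apply {B : Type} [AddCommGroup B] [Module Λᵐᵒᵖ B]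
    (a : Λᵐᵒᵖ) (v : B →ₗ[Λᵐᵒᵖ] Λ) (b : B) :
    (a • v) b = star a.unop * v b := rfl

variable (B : Type) [AddCommGroup B] [Module Λᵐᵒᵖ B]

/-- A sesquilinear form on a right `Λ`-module `B`, over a ring `Λ` with involution:
a biadditive map `h : B × B → Λ` with `h(xλ, yμ) = λ̄·h(x, y)·μ`. -/
structure SesqForm where
  toFun : B → B → Λ
  add_left : ∀ x y z, toFun (x + y) z = toFun x z + toFun y z
  add_right : ∀ x y z, toFun x (y + z) = toFun x y + toFun x z
  smul_left : ∀ (a : Λ) (x y : B), toFun ((MulOpposite.op a) • x) y = star a * toFun x y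
  smul_right : ∀ (a : Λ) (x y : B), toFun x ((MulOpposite.op a) • y) = toFun x y * a

variable {Λ B}

/-- A sesquilinear form is hermitian if it agrees with its transpose
`Th(x, y) = star (h (y, x))`. -/
def SesqForm.IsHermitian (h : SesqForm Λ B) : Prop :=
  ∀ x y, star (h.toFun y x) = h.toFun x y

/-- The adjoint of a sesquilinear form, evaluated at `x`: the `Λ`-linear map `y ↦ h(x, y)`. -/
noncomputable def SesqForm.adRight (h : SesqForm Λ B) (x : B) : B →ₗ[Λᵐᵒᵖ] Λ where
  toFun y := h.toFun x y
  map_add' y z := h.add_right x y z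
  map_smul' c y := by
    simpa [MulOpposite.smul_eq_mul_unop] using h.smul_right c.unop x y

/-- The adjoint `ad h : B → B*` of a sesquilinear form `h`, i.e. `(ad h)(x)(y) = h(x, y)`. -/
noncomputable def SesqForm.ad (h : SesqForm Λ B) : B →ₗ[Λᵐᵒᵖ] (B →ₗ[Λᵐᵒᵖ] Λ) where
  toFun := h.adRight
  map_add' x y := by ext z; simp [SesqForm.adRight, h.add_left]
  map_smul' c x := by
    ext z
    simpa [SesqForm.adRight, rdual_smul_apply] using h.smul_left c.unop x z

/-- The dual `f* : B* → A*` of a map `f : A → B` of right `Λ`-modules. -/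
noncomputable def rdualMap {A B : Type} [AddCommGroup A] [AddCommGroup B]
    [Module Λᵐᵒᵖ A] [Module Λᵐᵒᵖ B] (f : A →ₗ[Λᵐᵒᵖ] B) :
    (B →ₗ[Λᵐᵒᵖ] Λ) →ₗ[Λᵐᵒᵖ] (A →ₗ[Λᵐᵒᵖ] Λ) where
  toFun v := v.comp f
  map_add' v w := by ext a; simp
  map_smul' c v := by ext a; simp

/-- The double-dual map `γ : B → (B*)*`, `γ(b)(v) = star (v b)`. -/
noncomputable def rgamma (Λ : Type) [Ring Λ] [StarRing Λ]
    (B : Type) [AddCommGroup B] [Module Λᵐᵒᵖ B] :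
    B →ₗ[Λᵐᵒᵖ] ((B →ₗ[Λᵐᵒᵖ] Λ) →ₗ[Λᵐᵒᵖ] Λ) where
  toFun b :=
    { toFun := fun v => star (v b)
      map_add' := fun v w => by simp
      map_smul' := fun c v => by
        simp [rdual_smul_apply, star_mul, MulOpposite.smul_eq_mul_unop] }
  map_add' x y := by ext v; simp
  map_smul' c x := by
    ext v
    simp [rdual_smul_apply, MulOpposite.smul_eq_mul_unop, star_mul]

end RightModules

/-!
Write `Ts` for the transpose of `s`. Then `(ad s)* ∘ γ = ad (Ts)`, so `((ad s)*)⁻¹` sends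
`ad (Ts) b` to `γ(b)`. It follows that `γ(x) ∘ ((ad s)*)⁻¹` is a preimage of `x` under `(ad Ts)*`.
When `(ad Ts)*` is injective this preimage is `((ad Ts)*)⁻¹(x)`, and evaluating at `y` shows that
the form on `B*` induced by `Ts` is the transpose of the one induced by `s`. For hermitian `s`,
`Ts = s`.
-/

namespace SesqForm

variable {Λ : Type} [Ring Λ] [StarRing Λ] {B : Type} [AddCommGroup B] [Module Λᵐᵒᵖ B]

/-- The transpose `Ts(x, y) = star (s (y, x))` of a sesquilinear form `s`, which expresses
hermitian symmetry as the equation `Ts = s` between forms. -/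
def transpose (s : SesqForm Λ B) : SesqForm Λ B where
  toFun x y := star (s.toFun y x)
  add_left x y z := by rw [s.add_right, star_add]
  add_right x y z := by rw [s.add_left, star_add]
  smul_left a x y := by rw [s.smul_right, star_mul]
  smul_right a x y := by rw [s.smul_left, star_mul, star_star]

lemma IsHermitian.transpose_eq {s : SesqForm Λ B} (hs : s.IsHermitian) : s.transpose = s := by
  cases s
  simpa only [transpose, SesqForm.mk.injEq] using funext₂ hs

lemma rdualMap_ad_rgamma (s : SesqForm Λ B) (b : B) :
    rdualMap s.ad (rgamma Λ B b) = s.transpose.ad b :=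
  rfl

lemma rdualMap_transpose_ad_rgamma_comp {s : SesqForm Λ B}
    {g : (B →ₗ[Λᵐᵒᵖ] Λ) →ₗ[Λᵐᵒᵖ] ((B →ₗ[Λᵐᵒᵖ] Λ) →ₗ[Λᵐᵒᵖ] Λ)}
    (hg : Function.LeftInverse g (rdualMap s.ad)) (x : B →ₗ[Λᵐᵒᵖ] Λ) :
    rdualMap s.transpose.ad ((rgamma Λ (B →ₗ[Λᵐᵒᵖ] Λ) x).comp g) = x := by
  ext b
  calc rdualMap s.transpose.ad ((rgamma Λ (B →ₗ[Λᵐᵒᵖ] Λ) x).comp g) b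
      = star (g (s.transpose.ad b) x) := rfl
    _ = star (rgamma Λ B b x) := by rw [← rdualMap_ad_rgamma, hg]
    _ = x b := star_star (x b)

end SesqForm

theorem statement16_general {Λ : Type} [Ring Λ] [StarRing Λ]
    {B : Type} [AddCommGroup B] [Module Λᵐᵒᵖ B] (s : SesqForm Λ B)
    (hbij : Function.Bijective (rdualMap s.ad))
    (hinj : Function.Injective (rdualMap s.transpose.ad)) (x y : B →ₗ[Λᵐᵒᵖ] Λ) :
    star (Function.invFun (rdualMap s.ad) y x) =
      Function.invFun (rdualMap s.transpose.ad) x y := by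
  let e := LinearEquiv.ofBijective (rdualMap s.ad) hbij
  have invFun_ad : Function.invFun (rdualMap s.ad) = e.symm :=
    Function.invFun_eq_of_injective_of_rightInverse hbij.injective e.apply_symm_apply
  have invFun_transpose_ad : Function.invFun (rdualMap s.transpose.ad) x =
      (rgamma Λ (B →ₗ[Λᵐᵒᵖ] Λ) x).comp e.symm.toLinearMap := by
    have preimage := SesqForm.rdualMap_transpose_ad_rgamma_comp
      (g := e.symm.toLinearMap) e.symm_apply_apply x
    exact hinj ((Function.invFun_eq ⟨_, preimage⟩).trans preimage.symm)
  rw [invFun_ad, invFun_transpose_ad]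
  rfl

/-- Let `Λ` be a ring with involution, `B` a right `Λ`-module, and `s` a
hermitian form on `B` such that `(ad s)* : (B*)* → B*` is bijective. Then the form
`h(x, y) = ((ad s)*)⁻¹(x)(y)` on `B*` is hermitian. -/
theorem statement16 (Λ : Type) [Ring Λ] [StarRing Λ]
    (B : Type) [AddCommGroup B] [Module Λᵐᵒᵖ B] (s : SesqForm Λ B)
    (hs : s.IsHermitian) (hbij : Function.Bijective (rdualMap s.ad)) :
    ∀ x y : B →ₗ[Λᵐᵒᵖ] Λ,
      star ((Function.invFun ⇑(rdualMap s.ad) y) x) =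
        (Function.invFun ⇑(rdualMap s.ad) x) y := by
  simpa only [hs.transpose_eq] using
    statement16_general s hbij (hs.transpose_eq.symm ▸ hbij.injective)
end

section
/- Let Λ be a ring with involution, B and F right Λ-modules, s a hermitian form on B such that (ad s)* : (B*)* → B* is bijective, and h the reduced form on B* defined by h(x, y) = ((ad s)*)^{-1}(x)(y). Let φ : F → B* be a Λ-linear map, define θ(x, x') = −h(φ(x), φ(x')) for x, x' ∈ F, and define f : B ⊕ F → B* by f(b, x) = (ad s)(b) + φ(x). Then the form s ⊕ θ vanishes identically on the kernel of f: for all (b, x), (b', x') ∈ ker f, s(b, b') + θ(x, x') = 0. -/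
section Kernel

variable {Λ : Type} [Ring Λ] [StarRing Λ]

lemma rdualMap_apply {A B : Type} [AddCommGroup A] [AddCommGroup B]
    [Module Λᵐᵒᵖ A] [Module Λᵐᵒᵖ B] (f : A →ₗ[Λᵐᵒᵖ] B) (v : B →ₗ[Λᵐᵒᵖ] Λ) (a : A) :
    rdualMap f v a = v (f a) :=
  rfl

variable {B F : Type} [AddCommGroup B] [AddCommGroup F] [Module Λᵐᵒᵖ B] [Module Λᵐᵒᵖ F]

lemma SesqForm.ad_apply (s : SesqForm Λ B) (b b' : B) : s.ad b b' = s.toFun b b' :=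
  rfl

/-- The functional `ψ` plays the role of `((ad s)*)⁻¹(φ x)`. Its value at `φ x'` does not depend on
the choice of preimage because the kernel condition puts `φ x' = -(ad s)(b')` in the image of
`ad s`, where `ψ ∘ ad s = φ x` determines `ψ`. -/
theorem statement18_general (s : SesqForm Λ B) (φ : F →ₗ[Λᵐᵒᵖ] (B →ₗ[Λᵐᵒᵖ] Λ))
    {b b' : B} {x x' : F}
    (hmem : (b, x) ∈ LinearMap.ker
      (s.ad ∘ₗ LinearMap.fst Λᵐᵒᵖ B F + φ ∘ₗ LinearMap.snd Λᵐᵒᵖ B F))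
    (hmem' : (b', x') ∈ LinearMap.ker
      (s.ad ∘ₗ LinearMap.fst Λᵐᵒᵖ B F + φ ∘ₗ LinearMap.snd Λᵐᵒᵖ B F))
    {ψ : (B →ₗ[Λᵐᵒᵖ] Λ) →ₗ[Λᵐᵒᵖ] Λ} (hψ : rdualMap s.ad ψ = φ x) :
    s.toFun b b' + -(ψ (φ x')) = 0 := by
  have hx : s.ad b + φ x = 0 := LinearMap.mem_ker.mp hmem
  have hx' : φ x' = -s.ad b' := eq_neg_of_add_eq_zero_right (LinearMap.mem_ker.mp hmem')
  calc s.toFun b b' + -(ψ (φ x'))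
      = s.toFun b b' + ψ (s.ad b') := by rw [hx', map_neg, neg_neg]
    _ = s.ad b b' + φ x b' := by rw [← rdualMap_apply, hψ, s.ad_apply]
    _ = (s.ad b + φ x) b' := (LinearMap.add_apply _ _ _).symm
    _ = 0 := by rw [hx, LinearMap.zero_apply]

end Kernel

/-- Let `Λ` be a ring with involution, `B`, `F` right `Λ`-modules, `s` a
hermitian form on `B` with `(ad s)*` bijective, and `h` the reduced form on `B*`. Let
`φ : F → B*`, let `θ(x, x') = −h(φ x, φ x')`, and let `f : B ⊕ F → B*` be
`f(b, x) = (ad s)(b) + φ(x)`. Then `s ⊕ θ` vanishes identically on `ker f`. -/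
theorem statement18 (Λ : Type) [Ring Λ] [StarRing Λ]
    (B F : Type) [AddCommGroup B] [AddCommGroup F] [Module Λᵐᵒᵖ B] [Module Λᵐᵒᵖ F]
    (s : SesqForm Λ B) (hs : s.IsHermitian) (hbij : Function.Bijective (rdualMap s.ad))
    (φ : F →ₗ[Λᵐᵒᵖ] (B →ₗ[Λᵐᵒᵖ] Λ)) (b b' : B) (x x' : F)
    (hmem : (b, x) ∈ LinearMap.ker
      (s.ad ∘ₗ LinearMap.fst Λᵐᵒᵖ B F + φ ∘ₗ LinearMap.snd Λᵐᵒᵖ B F))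
    (hmem' : (b', x') ∈ LinearMap.ker
      (s.ad ∘ₗ LinearMap.fst Λᵐᵒᵖ B F + φ ∘ₗ LinearMap.snd Λᵐᵒᵖ B F)) :
    s.toFun b b' + -((Function.invFun ⇑(rdualMap s.ad) (φ x)) (φ x')) = 0 :=
  statement18_general s φ hmem hmem' (Function.rightInverse_invFun hbij.surjective (φ x))
end
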